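/- Let X be a real Banach space and g : [0,1] → X. Then g is McShane integrable on [0,1] if and only if the function F_g : [0,1] → ℓ∞(B_{X*}), F_g(t)(x*) = max (x*(g(t))) 0, is McShane integrable on [0,1]. (This is the main theorem: the multifunction G(t) = conv{0, g(t)} determined by g is McShane integrable iff g is McShane integrable, expressed through the isometric Rådström embedding of ck(X) into ℓ∞(B_{X*}), under which McShane integrability of G in the Hausdorff metric is McShane integrability of F_g.) -/

import Mathlib

/-!
In the McShane integral tags are not tied to their boxes. Hence two `δ`-fine partitions can be
refined to the same boxes `J`, carrying tags `s J` and `t J`, and on each box either tag may be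
chosen freely. For a scalar `φ`, taking the tag with the larger value everywhere, and then the
smaller one, gives two `δ`-fine partitions whose Riemann sums differ by `∑ |J| |φ (s J) - φ (t J)|`.
So the Cauchy condition for `φ` controls this absolute sum, and passes to `ψ ∘ φ` for every
Lipschitz `ψ` with the same gauge. With `φ = x* ∘ g` and `ψ a = max a 0` the estimate is uniform in
`x* ∈ B_{X*}`, which is the Cauchy condition for `F_g` in the sup norm. Conversely,
`x* (g t) = F_g t x* - F_g t (-x*)`.
-/

open MeasureTheory
open scoped ENNReal

/-- The image of the determined multifunction `G(t) = conv{0, g(t)}` under the Rådström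
support-function embedding: `Fg g t ∈ ℓ∞(B_{X*})` is given by `x* ↦ max (x* (g t)) 0`. -/
noncomputable def Fg {X : Type*} [NormedAddCommGroup X] [NormedSpace ℝ X]
    (g : ℝ → X) (t : ℝ) : lp (fun _ : Metric.closedBall (0 : X →L[ℝ] ℝ) 1 => ℝ) ∞ :=
  ⟨fun p => max ((p : X →L[ℝ] ℝ) (g t)) 0, by
    apply memℓp_infty
    refine ⟨‖g t‖, ?_⟩
    rintro r ⟨p, rfl⟩
    have hp : ‖(p : X →L[ℝ] ℝ)‖ ≤ 1 := mem_closedBall_zero_iff.mp p.2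
    have h1 : |(p : X →L[ℝ] ℝ) (g t)| ≤ ‖g t‖ := by
      calc |(p : X →L[ℝ] ℝ) (g t)| = ‖(p : X →L[ℝ] ℝ) (g t)‖ := rfl
        _ ≤ ‖(p : X →L[ℝ] ℝ)‖ * ‖g t‖ := (p : X →L[ℝ] ℝ).le_opNorm _
        _ ≤ 1 * ‖g t‖ := by gcongr
        _ = ‖g t‖ := one_mul _
    simp only [Real.norm_eq_abs]
    rcases le_total ((p : X →L[ℝ] ℝ) (g t)) 0 with h | h
    · rw [max_eq_right h]; simp [norm_nonneg]
    · rw [max_eq_left h, abs_of_nonneg h]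
      exact (le_abs_self _).trans h1⟩

/-- The unit interval `[0,1]` as a one-dimensional box. -/
noncomputable def unitBox : BoxIntegral.Box (Fin 1) :=
  ⟨fun _ => (0 : ℝ), fun _ => (1 : ℝ), fun _ => one_pos⟩

open BoxIntegral

section DualBall

variable {𝕜 E : Type*} [RCLike 𝕜] [NormedAddCommGroup E] [NormedSpace 𝕜 E]

theorem norm_apply_le_of_mem_closedBall {p : E →L[𝕜] 𝕜} (hp : p ∈ Metric.closedBall 0 1) (x : E) :
    ‖p x‖ ≤ ‖x‖ := by
  simpa using p.le_of_opNorm_le (mem_closedBall_zero_iff.1 hp) x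

theorem norm_le_iff_forall_closedBall {x : E} {C : ℝ} :
    ‖x‖ ≤ C ↔ ∀ p : Metric.closedBall (0 : E →L[𝕜] 𝕜) 1, ‖p.1 x‖ ≤ C := by
  refine ⟨fun h p => (norm_apply_le_of_mem_closedBall p.2 x).trans h, fun h => ?_⟩
  obtain ⟨p, hp, hpx⟩ := exists_dual_vector'' 𝕜 x
  simpa [hpx] using h ⟨p, mem_closedBall_zero_iff.2 hp⟩

end DualBall

theorem lp_infty_norm_le_iff {α : Type*} [Nonempty α] {E : α → Type*}
    [∀ i, NormedAddCommGroup (E i)] {f : lp E ∞} {C : ℝ} : ‖f‖ ≤ C ↔ ∀ i, ‖f i‖ ≤ C :=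
  ⟨fun h i => (lp.norm_apply_le_norm ENNReal.top_ne_zero f i).trans h, lp.norm_le_of_forall_le' C⟩

section FinePartitions

variable {ι : Type*} {I : Box ι}

open scoped Classical in
/-- The common refinement of two tagged partitions in which the boxes of `S` are tagged as in `π₁`
and the other boxes as in `π₂`. -/
noncomputable def mixTags (π₁ π₂ : TaggedPrepartition I) (S : Set (Box ι)) :
    TaggedPrepartition I where
  toPrepartition := π₁.toPrepartition ⊓ π₂.toPrepartition
  tag := S.piecewise (π₁.infPrepartition π₂.toPrepartition).tag
    (π₂.infPrepartition π₁.toPrepartition).tag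
  tag_mem_Icc J := by
    rw [Set.piecewise]
    split_ifs <;> exact TaggedPrepartition.tag_mem_Icc _ J

variable [Fintype ι]

/-- The McShane partitions of the box `I` that are fine for the gauge `r`: a tag may be any point
of `I`, not necessarily of its own box. -/
def finePartitions (I : Box ι) (r : (ι → ℝ) → Set.Ioi (0 : ℝ)) : Set (TaggedPrepartition I) :=
  {π | π.IsSubordinate r ∧ π.IsPartition}

theorem mixTags_mem_finePartitions {r : (ι → ℝ) → Set.Ioi (0 : ℝ)} {π₁ π₂ : TaggedPrepartition I}
    (h₁ : π₁ ∈ finePartitions I r) (h₂ : π₂ ∈ finePartitions I r) (S : Set (Box ι)) :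
    mixTags π₁ π₂ S ∈ finePartitions I r := by
  refine ⟨fun J hJ => ?_, Prepartition.IsPartition.inf h₁.2 h₂.2⟩
  by_cases hJS : J ∈ S
  · simpa [mixTags, hJS] using h₁.1.infPrepartition π₂.toPrepartition J hJ
  · simpa [mixTags, hJS] using h₂.1.infPrepartition π₁.toPrepartition J
      (TaggedPrepartition.mem_infPrepartition_comm.1 hJ)

end FinePartitions

theorem map_integralSum_toSMul {ι E F : Type*} {I : Box ι} {μ : ι →ᵇᵃ ℝ}
    [NormedAddCommGroup E] [NormedSpace ℝ E] [NormedAddCommGroup F] [NormedSpace ℝ F]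
    (L : E →ₗ[ℝ] F) (f : (ι → ℝ) → E) (π : TaggedPrepartition I) :
    L (integralSum f μ.toSMul π) = integralSum (fun v => L (f v)) μ.toSMul π := by
  simp only [integralSum, BoxAdditiveMap.toSMul_apply, map_sum, map_smul]

section McShaneCauchy

variable {ι : Type*} [Fintype ι] {I : Box ι} {μ : ι →ᵇᵃ ℝ} {r : (ι → ℝ) → Set.Ioi (0 : ℝ)} {ε : ℝ}
  {E : Type*} [NormedAddCommGroup E] [NormedSpace ℝ E]

/-- The Cauchy condition for the McShane integral of `f` over `I`, at a fixed gauge `r` and error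
`ε`. Keeping both explicit makes it possible to quantify over families of functions that share
one gauge. -/
def McShaneCauchyWith (I : Box ι) (μ : ι →ᵇᵃ ℝ) (f : (ι → ℝ) → E)
    (r : (ι → ℝ) → Set.Ioi (0 : ℝ)) (ε : ℝ) : Prop :=
  ∀ π₁ ∈ finePartitions I r, ∀ π₂ ∈ finePartitions I r,
    ‖integralSum f μ.toSMul π₁ - integralSum f μ.toSMul π₂‖ ≤ ε

theorem memBaseSet_mcShane_iff {c : NNReal} {π : TaggedPrepartition I} :
    IntegrationParams.McShane.MemBaseSet I c r π ↔ π.IsSubordinate r :=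
  ⟨fun h => h.isSubordinate, fun h => ⟨h, (nomatch ·), (nomatch ·), (nomatch ·)⟩⟩

theorem integrable_mcShane_iff_mcShaneCauchyWith [CompleteSpace E] {f : (ι → ℝ) → E} :
    Integrable I IntegrationParams.McShane f μ.toSMul ↔
      ∀ ε > 0, ∃ r, McShaneCauchyWith I μ f r ε := by
  rw [integrable_iff_cauchy_basis]
  simp only [memBaseSet_mcShane_iff, dist_eq_norm]
  refine forall₂_congr fun ε _ => ⟨fun ⟨r, _, h⟩ => ?_, fun ⟨r, h⟩ => ?_⟩
  · exact ⟨r 0, fun π₁ h₁ π₂ h₂ => h 0 0 π₁ π₂ h₁.1 h₁.2 h₂.1 h₂.2⟩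
  · exact ⟨fun _ => r, fun _ => IntegrationParams.rCond_of_bRiemann_eq_false _ rfl,
      fun _ _ π₁ π₂ hs₁ hp₁ hs₂ hp₂ => h π₁ ⟨hs₁, hp₁⟩ π₂ ⟨hs₂, hp₂⟩⟩

theorem mcShaneCauchyWith_iff_forall_of_norming {κ : Type*} {F : κ → Type*}
    [∀ k, NormedAddCommGroup (F k)] [∀ k, NormedSpace ℝ (F k)] (L : ∀ k, E →ₗ[ℝ] F k)
    (hL : ∀ x, ‖x‖ ≤ ε ↔ ∀ k, ‖L k x‖ ≤ ε) {f : (ι → ℝ) → E} :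
    McShaneCauchyWith I μ f r ε ↔ ∀ k, McShaneCauchyWith I μ (fun v => L k (f v)) r ε := by
  simp only [McShaneCauchyWith, hL, map_sub, map_integralSum_toSMul]
  exact ⟨fun h k π₁ h₁ π₂ h₂ => h π₁ h₁ π₂ h₂ k, fun h π₁ h₁ π₂ h₂ k => h k π₁ h₁ π₂ h₂⟩

theorem mcShaneCauchyWith_iff_forall_closedBall {f : (ι → ℝ) → E} :
    McShaneCauchyWith I μ f r ε ↔ ∀ p : Metric.closedBall (0 : E →L[ℝ] ℝ) 1,
      McShaneCauchyWith I μ (fun v => p.1 (f v)) r ε :=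
  mcShaneCauchyWith_iff_forall_of_norming
    (fun p : Metric.closedBall (0 : E →L[ℝ] ℝ) 1 => p.1.toLinearMap)
    fun _ => norm_le_iff_forall_closedBall

theorem mcShaneCauchyWith_lp_infty_iff {α : Type*} [Nonempty α] {F : α → Type*}
    [∀ i, NormedAddCommGroup (F i)] [∀ i, NormedSpace ℝ (F i)] {f : (ι → ℝ) → lp F ∞} :
    McShaneCauchyWith I μ f r ε ↔ ∀ i, McShaneCauchyWith I μ (fun v => f v i) r ε :=
  mcShaneCauchyWith_iff_forall_of_norming (fun i => lp.evalₗ (𝕜 := ℝ) F ∞ i)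
    fun _ => lp_infty_norm_le_iff

namespace McShaneCauchyWith

theorem sub {f g : (ι → ℝ) → E} {ε' : ℝ} (hf : McShaneCauchyWith I μ f r ε)
    (hg : McShaneCauchyWith I μ g r ε') :
    McShaneCauchyWith I μ (fun v => f v - g v) r (ε + ε') := by
  intro π₁ h₁ π₂ h₂
  have integralSum_sub (π : TaggedPrepartition I) :
      integralSum (fun v => f v - g v) μ.toSMul π =
        integralSum f μ.toSMul π - integralSum g μ.toSMul π := by
    simp only [integralSum, map_sub, Finset.sum_sub_distrib]
  rw [integralSum_sub, integralSum_sub, sub_sub_sub_comm]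
  exact (norm_sub_le _ _).trans (add_le_add (hf π₁ h₁ π₂ h₂) (hg π₁ h₁ π₂ h₂))

theorem sum_mul_abs_sub_le {φ : (ι → ℝ) → ℝ} (h : McShaneCauchyWith I μ φ r ε)
    {π₁ π₂ : TaggedPrepartition I} (h₁ : π₁ ∈ finePartitions I r) (h₂ : π₂ ∈ finePartitions I r) :
    ∑ J ∈ (π₁.toPrepartition ⊓ π₂.toPrepartition).boxes,
      μ J * |φ ((π₁.infPrepartition π₂.toPrepartition).tag J) -
        φ ((π₂.infPrepartition π₁.toPrepartition).tag J)| ≤ ε := by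
  set s := (π₁.infPrepartition π₂.toPrepartition).tag with hs
  set t := (π₂.infPrepartition π₁.toPrepartition).tag with ht
  let S : Set (Box ι) := {J | φ (t J) ≤ φ (s J)}
  calc ∑ J ∈ (π₁.toPrepartition ⊓ π₂.toPrepartition).boxes, μ J * |φ (s J) - φ (t J)|
    _ = integralSum φ μ.toSMul (mixTags π₁ π₂ S) - integralSum φ μ.toSMul (mixTags π₁ π₂ Sᶜ) := by
      change _ = ∑ J ∈ (π₁.toPrepartition ⊓ π₂.toPrepartition).boxes, _ -
        ∑ J ∈ (π₁.toPrepartition ⊓ π₂.toPrepartition).boxes, _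
      rw [← Finset.sum_sub_distrib]
      refine Finset.sum_congr rfl fun J _ => ?_
      rw [BoxAdditiveMap.toSMul_apply, BoxAdditiveMap.toSMul_apply, smul_eq_mul, smul_eq_mul,
        ← mul_sub]
      by_cases hJ : φ (t J) ≤ φ (s J)
      · simp [mixTags, S, hJ, ← hs, ← ht, abs_of_nonneg]
      · simp [mixTags, S, hJ, ← hs, ← ht, abs_of_neg, not_le.1 hJ]
    _ ≤ ε := (le_abs_self _).trans <|
      h _ (mixTags_mem_finePartitions h₁ h₂ S) _ (mixTags_mem_finePartitions h₁ h₂ Sᶜ)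

theorem lipschitz_comp {φ : (ι → ℝ) → ℝ} (h : McShaneCauchyWith I μ φ r ε) (hμ : ∀ J, 0 ≤ μ J)
    {K : NNReal} {ψ : ℝ → E} (hψ : LipschitzWith K ψ) :
    McShaneCauchyWith I μ (fun v => ψ (φ v)) r (K * ε) := by
  intro π₁ h₁ π₂ h₂
  set s := (π₁.infPrepartition π₂.toPrepartition).tag with hs
  set t := (π₂.infPrepartition π₁.toPrepartition).tag with ht
  have norm_term_le (J : Box ι) :
      ‖μ J • ψ (φ (s J)) - μ J • ψ (φ (t J))‖ ≤ K * (μ J * |φ (s J) - φ (t J)|) := by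
    rw [← smul_sub, norm_smul_of_nonneg (hμ J), mul_left_comm]
    exact mul_le_mul_of_nonneg_left (hψ.norm_sub_le _ _) (hμ J)
  rw [integralSum_sub_partitions _ _ h₁.2 h₂.2, ← hs, ← ht]
  calc ‖∑ J ∈ (π₁.toPrepartition ⊓ π₂.toPrepartition).boxes,
        (μ J • ψ (φ (s J)) - μ J • ψ (φ (t J)))‖
    _ ≤ ∑ J ∈ (π₁.toPrepartition ⊓ π₂.toPrepartition).boxes,
        K * (μ J * |φ (s J) - φ (t J)|) := norm_sum_le_of_le _ fun J _ => norm_term_le J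
    _ = K * ∑ J ∈ (π₁.toPrepartition ⊓ π₂.toPrepartition).boxes, μ J * |φ (s J) - φ (t J)| :=
      (Finset.mul_sum _ _ _).symm
    _ ≤ K * ε := mul_le_mul_of_nonneg_left (h.sum_mul_abs_sub_le h₁ h₂) K.coe_nonneg

end McShaneCauchyWith

end McShaneCauchy

section SegmentSupport

variable {X : Type*} [NormedAddCommGroup X] [NormedSpace ℝ X]

/-- The support function `x* ↦ max (x* x) 0` of the segment `conv{0, x}`, as an element of
`ℓ∞(B_{X*})`; thus `Fg g t` is `segmentSupport (g t)` by definition. -/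
noncomputable def segmentSupport (x : X) :
    lp (fun _ : Metric.closedBall (0 : X →L[ℝ] ℝ) 1 => ℝ) ∞ :=
  ⟨fun p => max (p.1 x) 0, by
    refine memℓp_infty ⟨‖x‖, Set.forall_mem_range.2 fun p => ?_⟩
    calc ‖max (p.1 x) 0‖
      _ ≤ ‖p.1 x‖ := by simpa using abs_max_sub_max_le_abs (p.1 x) 0 0
      _ ≤ ‖x‖ := norm_apply_le_of_mem_closedBall p.2 x⟩

theorem segmentSupport_apply (x : X) (p : Metric.closedBall (0 : X →L[ℝ] ℝ) 1) :
    segmentSupport x p = max (p.1 x) 0 := rfl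

theorem apply_eq_segmentSupport_sub (x : X) (p : Metric.closedBall (0 : X →L[ℝ] ℝ) 1) :
    p.1 x = segmentSupport x p - segmentSupport x (-p) :=
  (max_zero_sub_max_neg_zero_eq_self (p.1 x)).symm

variable {ι : Type*} [Fintype ι] {I : Box ι} {μ : ι →ᵇᵃ ℝ} {r : (ι → ℝ) → Set.Ioi (0 : ℝ)} {ε : ℝ}
  {f : (ι → ℝ) → X}

namespace McShaneCauchyWith

theorem comp_segmentSupport (h : McShaneCauchyWith I μ f r ε) (hμ : ∀ J, 0 ≤ μ J) :
    McShaneCauchyWith I μ (fun v => segmentSupport (f v)) r ε := by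
  refine mcShaneCauchyWith_lp_infty_iff.2 fun p => ?_
  have lipschitz_max : LipschitzWith 1 fun a : ℝ => max a 0 := LipschitzWith.id.max_const 0
  simpa [segmentSupport_apply] using
    (mcShaneCauchyWith_iff_forall_closedBall.1 h p).lipschitz_comp hμ lipschitz_max

theorem of_comp_segmentSupport (h : McShaneCauchyWith I μ (fun v => segmentSupport (f v)) r ε) :
    McShaneCauchyWith I μ f r (ε + ε) := by
  refine mcShaneCauchyWith_iff_forall_closedBall.2 fun p => ?_
  simp only [apply_eq_segmentSupport_sub]
  exact (mcShaneCauchyWith_lp_infty_iff.1 h p).sub (mcShaneCauchyWith_lp_infty_iff.1 h (-p))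

end McShaneCauchyWith

theorem mcShane_integrable_Fg_iff_general [CompleteSpace X] (hμ : ∀ J, 0 ≤ μ J) :
    Integrable I IntegrationParams.McShane f μ.toSMul ↔
      Integrable I IntegrationParams.McShane (fun v => segmentSupport (f v)) μ.toSMul := by
  simp only [integrable_mcShane_iff_mcShaneCauchyWith]
  refine ⟨fun h ε hε => ?_, fun h ε hε => ?_⟩
  · obtain ⟨r, hr⟩ := h ε hε
    exact ⟨r, hr.comp_segmentSupport hμ⟩
  · obtain ⟨r, hr⟩ := h (ε / 2) (half_pos hε)
    exact ⟨r, add_halves ε ▸ hr.of_comp_segmentSupport⟩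

end SegmentSupport

/-- Main theorem: the multifunction `G(t) = conv{0, g(t)}` determined by `g` (expressed
through the isometric Rådström embedding as `F_g : [0,1] → ℓ∞(B_{X*})`) is McShane
integrable on `[0,1]` if and only if `g` is McShane integrable on `[0,1]`. -/
theorem mcShane_integrable_Fg_iff {X : Type*} [NormedAddCommGroup X] [NormedSpace ℝ X]
    [CompleteSpace X] (g : ℝ → X) :
    (∃ y : X, BoxIntegral.HasIntegral unitBox BoxIntegral.IntegrationParams.McShane
        (fun v => g (v 0)) MeasureTheory.volume.toBoxAdditive.toSMul y) ↔
      (∃ Y, BoxIntegral.HasIntegral unitBox BoxIntegral.IntegrationParams.McShane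
        (fun v => Fg g (v 0)) MeasureTheory.volume.toBoxAdditive.toSMul Y) :=
  mcShane_integrable_Fg_iff_general fun _ => measureReal_nonneg
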